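/- arXiv:2305.09796 — 2 statements merged into one kernel-verified Lean document; each statement's English description precedes it below -/
import Mathlib

section
/- Let G and H be groups with finite generating sets S_G and S_H respectively, and consider the free product G * H generated by (the canonical images of) S_G ∪ S_H. Then in ℤ[[t]], 𝒢_{(G*H, S_G∪S_H)}(t)^{−1} = 𝒢_{(G,S_G)}(t)^{−1} + 𝒢_{(H,S_H)}(t)^{−1} − 1. -/
/-!
The proof rests on the normal form theorem for free products. Let `F`, `A`, `B` be the growth
series of `G * H`, `G`, `H`. The length of an element of `G * H` is the sum of the lengths of the
letters of its reduced word (`wordLength_coprodI`): concatenating geodesics of the letters gives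
one inequality, and multiplying a reduced word by a generator changes the total length by at most
one, which gives the other.

Let `P` (resp. `Q`) be the series counting, by length, the reduced words that do not start with a
letter of `G` (resp. of `H`). Every reduced word is uniquely a product of an element of `G` and a
word of the first kind, so `F = A * P`, and likewise `F = B * Q` (`lengthSeries_factor`). Every
word is of one of the two kinds, and only the empty word is of both, so `F + 1 = P + Q`
(`lengthSeries_add_one`). Dividing by `F` gives `1 + F⁻¹ = A⁻¹ + B⁻¹`.

The reduced words of Mathlib live in `Monoid.CoprodI`, an indexed free product over a single universe,
so `G` and `H` are lifted to a common universe and put in a family over `Bool`.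
-/

open scoped Classical

/-- The word length of `g` with respect to the alphabet `S ∪ S⁻¹`. -/
noncomputable def wordLength {G : Type*} [Group G] (S : Set G) (g : G) : ℕ :=
  sInf {n | ∃ w : List G, w.length = n ∧ (∀ a ∈ w, a ∈ S ∪ S⁻¹) ∧ w.prod = g}

/-- The growth series of a subset `A` of a group `G` with respect to a generating set `S`. -/
noncomputable def growthSeries {G : Type*} [Group G] (S : Set G) (A : Set G) :
    PowerSeries ℤ :=
  PowerSeries.mk fun n => (Set.ncard {g ∈ A | wordLength S g = n} : ℤ)

universe u v

/-! ### Word length -/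

/-- `g` is a product of exactly `n` letters from `S ∪ S⁻¹`. -/
def IsWordOfLength {G : Type*} [Group G] (S : Set G) (n : ℕ) (g : G) : Prop :=
  ∃ w : List G, w.length = n ∧ (∀ a ∈ w, a ∈ S ∪ S⁻¹) ∧ w.prod = g

section WordLength

variable {G : Type*} [Group G] {S : Set G}

lemma wordLength_le {n : ℕ} {g : G} (h : IsWordOfLength S n g) : wordLength S g ≤ n :=
  Nat.sInf_le h

lemma isWordOfLength_wordLength (hS : Subgroup.closure S = ⊤) (g : G) :
    IsWordOfLength S (wordLength S g) g := by
  have hne : {n | IsWordOfLength S n g}.Nonempty := by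
    have hg : g ∈ Submonoid.closure (S ∪ S⁻¹) := by
      rw [← Subgroup.closure_toSubmonoid, hS]
      exact Subgroup.mem_top g
    obtain ⟨l, hl, rfl⟩ := Submonoid.exists_list_of_mem_closure hg
    exact ⟨l.length, l, rfl, hl, rfl⟩
  exact Nat.sInf_mem hne

lemma IsWordOfLength.one : IsWordOfLength S 0 (1 : G) := ⟨[], by simp⟩

lemma IsWordOfLength.mul {m n : ℕ} {g h : G} (hg : IsWordOfLength S m g)
    (hh : IsWordOfLength S n h) : IsWordOfLength S (m + n) (g * h) := by
  obtain ⟨l, rfl, hl, rfl⟩ := hg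
  obtain ⟨k, rfl, hk, rfl⟩ := hh
  refine ⟨l ++ k, by simp, fun a ha => ?_, by simp⟩
  rcases List.mem_append.1 ha with h | h
  exacts [hl a h, hk a h]

lemma IsWordOfLength.map {K : Type*} [Group K] (f : G →* K) {T : Set K}
    (hf : ∀ s ∈ S, f s ∈ T) {n : ℕ} {g : G} (hg : IsWordOfLength S n g) :
    IsWordOfLength T n (f g) := by
  obtain ⟨l, rfl, hl, rfl⟩ := hg
  refine ⟨l.map f, by simp, fun a ha => ?_, by simp [map_list_prod]⟩
  obtain ⟨b, hb, rfl⟩ := List.mem_map.1 ha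
  rcases hl b hb with h | h
  · exact Or.inl (hf b h)
  · exact Or.inr (by simpa using hf _ h)

lemma wordLength_one : wordLength S (1 : G) = 0 :=
  Nat.le_zero.1 (wordLength_le IsWordOfLength.one)

lemma wordLength_eq_zero_iff (hS : Subgroup.closure S = ⊤) {g : G} :
    wordLength S g = 0 ↔ g = 1 := by
  refine ⟨fun h => ?_, fun h => h ▸ wordLength_one⟩
  obtain ⟨l, hl, -, rfl⟩ := isWordOfLength_wordLength hS g
  rw [h, List.length_eq_zero_iff] at hl
  simp [hl]

lemma wordLength_mul_le_of_mem (hS : Subgroup.closure S = ⊤) {s : G} (hs : s ∈ S ∪ S⁻¹) (g : G) :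
    wordLength S (s * g) ≤ wordLength S g + 1 := by
  have h1 : IsWordOfLength S 1 s := ⟨[s], by simpa using hs⟩
  have := wordLength_le (h1.mul (isWordOfLength_wordLength hS g))
  omega

/-- Spheres are finite, so that `Set.ncard` counts them correctly. -/
lemma finite_wordLength_eq (hfin : S.Finite) (hS : Subgroup.closure S = ⊤) (n : ℕ) :
    {g : G | wordLength S g = n}.Finite := by
  have hfin' : Finite ↥(S ∪ S⁻¹) := (hfin.union hfin.inv).to_subtype
  refine ((List.finite_length_eq ↥(S ∪ S⁻¹) n).image
    fun l => (l.map Subtype.val).prod).subset ?_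
  rintro g rfl
  obtain ⟨l, hl, hmem, hprod⟩ := isWordOfLength_wordLength hS g
  refine ⟨l.attach.map fun a => ⟨a.1, hmem a.1 a.2⟩, by simpa using hl, ?_⟩
  simp [List.map_map, Function.comp_def, hprod]

lemma wordLength_mulEquiv {K : Type*} [Group K] (e : G ≃* K) (g : G) :
    wordLength (e '' S) (e g) = wordLength S g := by
  unfold wordLength
  congr 1
  ext n
  constructor
  · intro h
    have := IsWordOfLength.map (T := S) e.symm.toMonoidHom (by simp) h
    rwa [MulEquiv.coe_toMonoidHom, MulEquiv.symm_apply_apply] at this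
  · intro h
    exact IsWordOfLength.map (T := e '' S) e.toMonoidHom
      (fun s hs => Set.mem_image_of_mem e hs) h

end WordLength

/-! ### Counting by length -/

/-- The generating series of a type `X` graded by `ℓ`. A fibre of `ℓ` that is infinite contributes
the junk coefficient `0`. -/
noncomputable def lengthSeries {X : Type*} (ℓ : X → ℕ) : PowerSeries ℤ :=
  PowerSeries.mk fun n => (Set.ncard {x | ℓ x = n} : ℤ)

lemma growthSeries_univ {G : Type*} [Group G] (S : Set G) :
    growthSeries S Set.univ = lengthSeries (wordLength S) := by
  simp [growthSeries, lengthSeries]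

lemma lengthSeries_equiv {X Y : Type*} (e : X ≃ Y) {ℓ : X → ℕ} {m : Y → ℕ}
    (h : ∀ x, m (e x) = ℓ x) : lengthSeries ℓ = lengthSeries m := by
  ext n
  simp only [lengthSeries, PowerSeries.coeff_mk]
  rw [← Set.ncard_image_of_injective {x | ℓ x = n} e.injective]
  congr 2
  ext y
  simp only [Set.mem_image, Set.mem_ofPred_eq]
  constructor
  · rintro ⟨x, hx, rfl⟩
    rw [h, hx]
  · intro hy
    exact ⟨e.symm y, by rw [← h]; simpa using hy, by simp⟩

lemma coeff_lengthSeries_subtype {X : Type*} (p : X → Prop) (ℓ : X → ℕ) (n : ℕ) :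
    PowerSeries.coeff n (lengthSeries fun x : {x // p x} => ℓ x) =
      (Set.ncard {x | p x ∧ ℓ x = n} : ℤ) := by
  simp only [lengthSeries, PowerSeries.coeff_mk]
  rw [← Set.ncard_image_of_injective _ Subtype.val_injective]
  congr 2
  ext x
  simp [and_comm]

lemma lengthSeries_mul {X Y : Type*} {ℓ : X → ℕ} {m : Y → ℕ}
    (hℓ : ∀ n, {x | ℓ x = n}.Finite) (hm : ∀ n, {y | m y = n}.Finite) :
    lengthSeries (fun p : X × Y => ℓ p.1 + m p.2) = lengthSeries ℓ * lengthSeries m := by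
  ext n
  have hset : {p : X × Y | ℓ p.1 + m p.2 = n} =
      ↑((Finset.HasAntidiagonal.antidiagonal n).biUnion fun q =>
        (hℓ q.1).toFinset ×ˢ (hm q.2).toFinset) := by
    ext p
    simp
  rw [PowerSeries.coeff_mul]
  simp only [lengthSeries, PowerSeries.coeff_mk]
  rw [hset, Set.ncard_coe_finset, Finset.card_biUnion]
  · push_cast
    refine Finset.sum_congr rfl fun q _ => ?_
    rw [Finset.card_product, Set.ncard_eq_toFinset_card _ (hℓ q.1),
      Set.ncard_eq_toFinset_card _ (hm q.2)]
    push_cast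
    rfl
  · intro q _ r _ hqr
    refine Finset.disjoint_left.2 fun p hp hp' => hqr ?_
    simp only [Finset.mem_product, Set.Finite.mem_toFinset, Set.mem_ofPred_eq] at hp hp'
    exact Prod.ext (hp.1.symm.trans hp'.1) (hp.2.symm.trans hp'.2)

lemma isUnit_lengthSeries_wordLength {G : Type*} [Group G] {S : Set G}
    (hS : Subgroup.closure S = ⊤) : IsUnit (lengthSeries (wordLength S)) := by
  rw [PowerSeries.isUnit_iff_constantCoeff, ← PowerSeries.coeff_zero_eq_constantCoeff_apply]
  simp [lengthSeries, wordLength_eq_zero_iff hS]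

/-! ### Reduced words -/

open Monoid

section Words

variable {ι : Type*} {M : ι → Type*} [∀ i, Group (M i)] (S : ∀ i, Set (M i))

/-- The total length of the letters of a reduced word. -/
noncomputable def reducedLength (w : CoprodI.Word M) : ℕ :=
  (w.toList.map fun a => wordLength (S a.1) a.2).sum

lemma reducedLength_rcons {i : ι} (p : CoprodI.Word.Pair M i) :
    reducedLength S (CoprodI.Word.rcons p) =
      wordLength (S i) p.head + reducedLength S p.tail := by
  unfold CoprodI.Word.rcons
  split_ifs with h
  · simp [h, wordLength_one]
  · simp [reducedLength, CoprodI.Word.cons]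

/-- The generating set of a free product: the union of the images of the generating sets of the
factors. -/
def coprodGenerators : Set (CoprodI M) := ⋃ i, CoprodI.of '' S i

variable {S}

lemma isWordOfLength_prod (hS : ∀ i, Subgroup.closure (S i) = ⊤) (w : CoprodI.Word M) :
    IsWordOfLength (coprodGenerators S) (reducedLength S w) w.prod := by
  unfold CoprodI.Word.prod reducedLength
  induction w.toList with
  | nil => exact IsWordOfLength.one
  | cons a l ih =>
    simp only [List.map_cons, List.prod_cons, List.sum_cons]
    refine IsWordOfLength.mul ?_ ih
    exact (isWordOfLength_wordLength (hS a.1) a.2).map CoprodI.of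
      fun s hs =>
        Set.mem_iUnion_of_mem (s := fun i => CoprodI.of '' S i) a.1 (Set.mem_image_of_mem _ hs)

lemma closure_coprodGenerators (hS : ∀ i, Subgroup.closure (S i) = ⊤) :
    Subgroup.closure (coprodGenerators S) = ⊤ := by
  rw [coprodGenerators, Subgroup.closure_iUnion]
  simp_rw [← MonoidHom.map_closure, hS, ← MonoidHom.range_eq_map]
  rw [← CoprodI.range_eq_iSup, CoprodI.lift_of', MonoidHom.range_eq_top]
  exact Function.surjective_id

variable [DecidableEq ι]

/-- Left multiplication by a generator only changes the leading letter from its factor. -/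
lemma reducedLength_of_smul_le (hS : ∀ i, Subgroup.closure (S i) = ⊤) {i : ι} {s : M i}
    (hs : s ∈ S i ∪ (S i)⁻¹) (w : CoprodI.Word M) :
    reducedLength S (CoprodI.of s • w) ≤ reducedLength S w + 1 := by
  have hw : reducedLength S w = wordLength (S i) (CoprodI.Word.equivPair i w).head +
      reducedLength S (CoprodI.Word.equivPair i w).tail := by
    conv_lhs => rw [← (CoprodI.Word.equivPair i).symm_apply_apply w]
    rw [CoprodI.Word.equivPair_symm, reducedLength_rcons]
  rw [CoprodI.Word.of_smul_def, reducedLength_rcons, hw]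
  have := wordLength_mul_le_of_mem (hS i) hs (CoprodI.Word.equivPair i w).head
  simp only
  omega

lemma reducedLength_smul_empty_le (hS : ∀ i, Subgroup.closure (S i) = ⊤) {n : ℕ} {g : CoprodI M}
    (hg : IsWordOfLength (coprodGenerators S) n g) :
    reducedLength S (g • (CoprodI.Word.empty : CoprodI.Word M)) ≤ n := by
  obtain ⟨l, rfl, hl, rfl⟩ := hg
  induction l with
  | nil => simp [reducedLength, CoprodI.Word.empty]
  | cons a l ih =>
    have ih' := ih fun b hb => hl b (List.mem_cons_of_mem _ hb)
    obtain ⟨i, s, hs, rfl⟩ : ∃ i, ∃ s : M i, s ∈ S i ∪ (S i)⁻¹ ∧ CoprodI.of s = a := by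
      rcases hl a List.mem_cons_self with h | h
      · obtain ⟨i, s, hs, rfl⟩ := Set.mem_iUnion.1 h
        exact ⟨i, s, Or.inl hs, rfl⟩
      · obtain ⟨i, s, hs, hsa⟩ := Set.mem_iUnion.1 (Set.mem_inv.1 h)
        exact ⟨i, s⁻¹, Or.inr (by simpa using hs), by rw [map_inv, hsa, inv_inv]⟩
    rw [List.prod_cons, mul_smul, List.length_cons]
    exact (reducedLength_of_smul_le hS hs _).trans (by omega)

lemma wordLength_coprodI (hS : ∀ i, Subgroup.closure (S i) = ⊤) (g : CoprodI M) :
    reducedLength S (CoprodI.Word.equiv g) = wordLength (coprodGenerators S) g := by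
  have hword := isWordOfLength_prod hS (CoprodI.Word.equiv g)
  have hprod : (CoprodI.Word.equiv g).prod = g := CoprodI.Word.equiv.symm_apply_apply g
  rw [hprod] at hword
  refine le_antisymm ?_ (wordLength_le hword)
  exact reducedLength_smul_empty_le hS
    (isWordOfLength_wordLength (closure_coprodGenerators hS) g)

lemma finite_reducedLength_eq [Finite ι] (hfin : ∀ i, (S i).Finite)
    (hS : ∀ i, Subgroup.closure (S i) = ⊤) (n : ℕ) :
    {w : CoprodI.Word M | reducedLength S w = n}.Finite := by
  have h := finite_wordLength_eq (Set.finite_iUnion fun i => (hfin i).image CoprodI.of)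
    (closure_coprodGenerators hS) n
  refine (h.image CoprodI.Word.equiv).subset fun w hw => ?_
  refine ⟨CoprodI.Word.equiv.symm w, ?_, by simp⟩
  have := wordLength_coprodI hS (CoprodI.Word.equiv.symm w)
  rw [Equiv.apply_symm_apply] at this
  exact this.symm.trans hw

/-- A pair is a head together with a reduced word that does not start in the factor `i`. -/
def pairEquivProd (i : ι) :
    CoprodI.Word.Pair M i ≃ M i × {w : CoprodI.Word M // w.fstIdx ≠ some i} where
  toFun p := (p.head, ⟨p.tail, p.fstIdx_ne⟩)
  invFun q := ⟨q.1, q.2.1, q.2.2⟩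
  left_inv _ := rfl
  right_inv _ := rfl

lemma lengthSeries_factor [Finite ι] (hfin : ∀ i, (S i).Finite)
    (hS : ∀ i, Subgroup.closure (S i) = ⊤) (i : ι) :
    lengthSeries (reducedLength S) = lengthSeries (wordLength (S i)) *
      lengthSeries (fun w : {w : CoprodI.Word M // w.fstIdx ≠ some i} => reducedLength S w) := by
  rw [← lengthSeries_mul (finite_wordLength_eq (hfin i) (hS i))]
  · refine lengthSeries_equiv ((CoprodI.Word.equivPair i).trans (pairEquivProd i)) fun w => ?_
    conv_rhs => rw [← (CoprodI.Word.equivPair i).symm_apply_apply w]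
    rw [CoprodI.Word.equivPair_symm, reducedLength_rcons]
    rfl
  · exact fun n => (finite_reducedLength_eq hfin hS n).preimage Subtype.val_injective.injOn

end Words

/-! ### Two factors -/

section TwoFactors

variable {M : Bool → Type*} [∀ i, Group (M i)] {S : ∀ i, Set (M i)}

/-- With two factors, every reduced word avoids one of them as its first factor, and only the
empty word avoids both. -/
lemma lengthSeries_add_one (hfin : ∀ i, (S i).Finite) (hS : ∀ i, Subgroup.closure (S i) = ⊤) :
    lengthSeries (reducedLength S) + 1 =
      lengthSeries (fun w : {w : CoprodI.Word M // w.fstIdx ≠ some true} => reducedLength S w) +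
      lengthSeries
        (fun w : {w : CoprodI.Word M // w.fstIdx ≠ some false} => reducedLength S w) := by
  ext n
  rw [map_add, map_add, coeff_lengthSeries_subtype _ (reducedLength S),
    coeff_lengthSeries_subtype _ (reducedLength S)]
  have hF := finite_reducedLength_eq hfin hS n
  have key := Set.ncard_union_add_ncard_inter
    {w : CoprodI.Word M | w.fstIdx ≠ some true ∧ reducedLength S w = n}
    {w : CoprodI.Word M | w.fstIdx ≠ some false ∧ reducedLength S w = n}
    (hF.subset fun w hw => hw.2) (hF.subset fun w hw => hw.2)
  have hunion : {w : CoprodI.Word M | w.fstIdx ≠ some true ∧ reducedLength S w = n} ∪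
      {w : CoprodI.Word M | w.fstIdx ≠ some false ∧ reducedLength S w = n} =
      {w | reducedLength S w = n} := by
    ext w
    simp only [Set.mem_union, Set.mem_ofPred_eq, ← or_and_right, and_iff_right_iff_imp]
    intro _
    by_cases h : w.fstIdx = some true <;> simp [h]
  have hinter : {w : CoprodI.Word M | w.fstIdx ≠ some true ∧ reducedLength S w = n} ∩
      {w : CoprodI.Word M | w.fstIdx ≠ some false ∧ reducedLength S w = n} =
      if n = 0 then {CoprodI.Word.empty} else ∅ := by
    have hempty : reducedLength S (CoprodI.Word.empty : CoprodI.Word M) = 0 := by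
      simp [reducedLength, CoprodI.Word.empty]
    ext w
    constructor
    · rintro ⟨⟨h1, h3⟩, h2, -⟩
      have hw : w = CoprodI.Word.empty := by
        rcases w with ⟨_ | ⟨⟨i, m⟩, l⟩, _, _⟩
        · rfl
        · cases i <;> simp [CoprodI.Word.fstIdx] at h1 h2
      subst hw
      simp [← h3, hempty]
    · intro h
      split_ifs at h with hn
      · rw [Set.mem_singleton_iff.1 h, hn]
        exact ⟨⟨by simp [CoprodI.Word.fstIdx, CoprodI.Word.empty], hempty⟩,
          by simp [CoprodI.Word.fstIdx, CoprodI.Word.empty], hempty⟩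
      · exact absurd h (Set.notMem_empty _)
  rw [hunion, hinter] at key
  rw [← Nat.cast_add, ← key, lengthSeries, PowerSeries.coeff_mk, PowerSeries.coeff_one]
  split_ifs <;> simp

lemma inverse_lengthSeries_coprodI (hfin : ∀ i, (S i).Finite)
    (hS : ∀ i, Subgroup.closure (S i) = ⊤) :
    Ring.inverse (lengthSeries (wordLength (coprodGenerators S))) =
      Ring.inverse (lengthSeries (wordLength (S true))) +
      Ring.inverse (lengthSeries (wordLength (S false))) - 1 := by
  have hF := Ring.inverse_mul_cancel _
    (isUnit_lengthSeries_wordLength (closure_coprodGenerators hS))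
  have hA := Ring.inverse_mul_cancel _ (isUnit_lengthSeries_wordLength (hS true))
  have hB := Ring.inverse_mul_cancel _ (isUnit_lengthSeries_wordLength (hS false))
  have hFL := lengthSeries_equiv CoprodI.Word.equiv (wordLength_coprodI hS)
  have hP := lengthSeries_factor hfin hS true
  have hQ := lengthSeries_factor hfin hS false
  have hPQ := lengthSeries_add_one hfin hS
  rw [← hFL] at hP hQ hPQ
  generalize lengthSeries (wordLength (coprodGenerators S)) = F at *
  generalize lengthSeries (wordLength (S true)) = A at *
  generalize lengthSeries (wordLength (S false)) = B at *
  generalize Ring.inverse F = f at *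
  generalize Ring.inverse A = a at *
  generalize Ring.inverse B = b at *
  generalize lengthSeries
    (fun w : {w : CoprodI.Word M // w.fstIdx ≠ some true} => reducedLength S w) = P at *
  generalize lengthSeries
    (fun w : {w : CoprodI.Word M // w.fstIdx ≠ some false} => reducedLength S w) = Q at *
  have hP' : P = a * F := by rw [hP, ← mul_assoc, hA, one_mul]
  have hQ' : Q = b * F := by rw [hQ, ← mul_assoc, hB, one_mul]
  rw [hP', hQ'] at hPQ
  linear_combination f * hPQ + (a + b - 1) * hF

end TwoFactors

/-! ### Comparison with the binary free product -/

section Comparison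

variable (G : Type u) (H : Type v) [Group G] [Group H]

/-- `G` and `H`, lifted to a common universe, as a family over `Bool`. -/
def factorFamily : Bool → Type (max u v)
  | true => ULift.{v} G
  | false => ULift.{u} H

instance instGroupFactorFamily : ∀ i, Group (factorFamily G H i)
  | true => inferInstanceAs (Group (ULift.{v} G))
  | false => inferInstanceAs (Group (ULift.{u} H))

/-- `G` is the factor with index `true`. -/
def leftFactor : G ≃* factorFamily G H true := (MulEquiv.ulift (α := G)).symm

/-- `H` is the factor with index `false`. -/
def rightFactor : H ≃* factorFamily G H false := (MulEquiv.ulift (α := H)).symm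

/-- The generating sets of `G` and `H`, transported to the family. -/
def factorGenerators {G : Type u} {H : Type v} [Group G] [Group H] (SG : Set G) (SH : Set H) :
    ∀ i, Set (factorFamily G H i)
  | true => leftFactor G H '' SG
  | false => rightFactor G H '' SH

/-- The canonical map of each factor of the family to the binary free product. -/
def factorToCoprod : ∀ i, factorFamily G H i →* Coprod G H
  | true => Coprod.inl.comp (leftFactor G H).symm.toMonoidHom
  | false => Coprod.inr.comp (rightFactor G H).symm.toMonoidHom

/-- The binary free product agrees with the indexed one. -/
def coprodEquiv : Coprod G H ≃* CoprodI (factorFamily G H) :=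
  MonoidHom.toMulEquiv
    (Coprod.lift (CoprodI.of.comp (leftFactor G H).toMonoidHom)
      (CoprodI.of.comp (rightFactor G H).toMonoidHom))
    (CoprodI.lift (factorToCoprod G H))
    (by
      apply Coprod.hom_ext <;> ext x <;> simp [factorToCoprod])
    (by
      apply CoprodI.ext_hom
      rintro (_ | _) <;> ext x <;> simp [factorToCoprod])

variable {G H}

lemma coprodEquiv_image_generators (SG : Set G) (SH : Set H) :
    coprodEquiv G H '' (Coprod.inl '' SG ∪ Coprod.inr '' SH) =
      coprodGenerators (factorGenerators SG SH) := by
  have hl (g : G) : coprodEquiv G H (Coprod.inl g) = CoprodI.of (leftFactor G H g) :=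
    rfl
  have hr (h : H) : coprodEquiv G H (Coprod.inr h) = CoprodI.of (rightFactor G H h) :=
    rfl
  rw [Set.image_union, Set.image_image, Set.image_image, coprodGenerators, ← Set.iSup_eq_iUnion,
    iSup_bool_eq]
  simp only [factorGenerators, Set.image_image, hl, hr, Set.sup_eq_union]

end Comparison

open Monoid Monoid.Coprod in
/-- For the free product `G * H` with generating set `S_G ∪ S_H`,
`𝒢_{(G*H, S_G∪S_H)}⁻¹ = 𝒢_{(G,S_G)}⁻¹ + 𝒢_{(H,S_H)}⁻¹ − 1`. -/
theorem growthSeries_inv_free_product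
    {G H : Type*} [Group G] [Group H] (SG : Set G) (SH : Set H)
    (hSGfin : SG.Finite) (hSHfin : SH.Finite)
    (hSGgen : Subgroup.closure SG = ⊤) (hSHgen : Subgroup.closure SH = ⊤) :
    Ring.inverse (growthSeries
        ((Coprod.inl '' SG ∪ Coprod.inr '' SH : Set (Monoid.Coprod G H)))
        (Set.univ : Set (Monoid.Coprod G H))) =
      Ring.inverse (growthSeries SG (Set.univ : Set G)) +
      Ring.inverse (growthSeries SH (Set.univ : Set H)) - 1 := by
  have hS : ∀ i, Subgroup.closure (factorGenerators SG SH i) = ⊤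
    | true => by
      have := MonoidHom.map_closure (leftFactor G H).toMonoidHom SG
      rw [hSGgen, ← MonoidHom.range_eq_map,
        MonoidHom.range_eq_top.2 (leftFactor G H).surjective] at this
      exact this.symm
    | false => by
      have := MonoidHom.map_closure (rightFactor G H).toMonoidHom SH
      rw [hSHgen, ← MonoidHom.range_eq_map,
        MonoidHom.range_eq_top.2 (rightFactor G H).surjective] at this
      exact this.symm
  have hfin : ∀ i, (factorGenerators SG SH i).Finite
    | true => hSGfin.image _
    | false => hSHfin.image _
  have hG : lengthSeries (wordLength SG) =
      lengthSeries (wordLength (factorGenerators SG SH true)) :=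
    lengthSeries_equiv (leftFactor G H).toEquiv fun g => wordLength_mulEquiv (leftFactor G H) g
  have hH : lengthSeries (wordLength SH) =
      lengthSeries (wordLength (factorGenerators SG SH false)) :=
    lengthSeries_equiv (rightFactor G H).toEquiv fun h => wordLength_mulEquiv (rightFactor G H) h
  have hGH : lengthSeries (wordLength (Coprod.inl '' SG ∪ Coprod.inr '' SH)) =
      lengthSeries (wordLength (coprodGenerators (factorGenerators SG SH))) := by
    rw [← coprodEquiv_image_generators]
    exact lengthSeries_equiv (coprodEquiv G H).toEquiv
      fun x => wordLength_mulEquiv (coprodEquiv G H) x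
  rw [growthSeries_univ, growthSeries_univ, growthSeries_univ, hG, hH, hGH]
  exact inverse_lengthSeries_coprodI hfin hS
end

section
/- Let (W,S) be an infinite Coxeter system with S finite. Then in ℤ[[t]], (−1)^{|S|+1} · 𝒢_{(W,S)}(t)^{−1} = Σ_{X ⊊ S} (−1)^{|X|} · 𝒢_{(W_X,X)}(t)^{−1}, the sum being over all proper subsets X of S. -/
/-!
Write `W_X` for the standard parabolic subgroup of `X ⊆ S` and `W^X` for the set of `u ∈ W` without
right descent in `X`.  Every `w ∈ W` is uniquely `w = u v` with `u ∈ W^X`, `v ∈ W_X`, and then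
`ℓ(w) = ℓ(u) + ℓ_X(v)`; hence `𝒢_W = W^X(t) · 𝒢_{W_X}`, where `W^X(t)` is the growth series of `W^X`
(`growthSeries_mul`).  Multiplying the claim by the unit `𝒢_W` turns it into
`∑_{X ⊆ S} (-1)^{|X|} W^X(t) = 0`.  The coefficient at `t ^ n` is a sum over `w` of length `n` of the
alternating sum over all `X` contained in the set of non-descents of `w`.  This inner sum vanishes
unless every element of `S` is a right descent of `w`, and such a `w` exists only if `W` is finite:
every reduced word is then a suffix of a reduced word of `w`, so lengths are bounded
(`finite_of_forall_isRightDescent`).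

Both facts rest on the exchange property (`exchange`).  It is derived from an action of `W` on
`W × ZMod 2` (`reflHom`), which shows that the parity of the number of occurrences of `t` in the
right inversion sequence of a word depends only on the element the word represents.
-/

open scoped Classical

namespace CoxeterGrowth

open List CoxeterSystem

variable {B : Type} {W : Type} [Group W] {M : CoxeterMatrix B} (cs : CoxeterSystem M W)

/-! ### The exchange property -/

/-- The permutation `(t, ε) ↦ (s_i t s_i, ε + [t = s_i])` of `W × ZMod 2`. All of `W` is used in the
first factor, although only reflections `t` matter. -/
noncomputable def reflPerm (i : B) : Equiv.Perm (W × ZMod 2) where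
  toFun p := (cs.simple i * p.1 * cs.simple i, p.2 + if p.1 = cs.simple i then 1 else 0)
  invFun p := (cs.simple i * p.1 * cs.simple i, p.2 + if p.1 = cs.simple i then 1 else 0)
  left_inv := by
    rintro ⟨t, e⟩
    have h : cs.simple i * t * cs.simple i = cs.simple i ↔ t = cs.simple i := by
      constructor
      · intro h
        have := mul_eq_right.mp h
        rw [← cs.inv_simple i]
        exact (inv_eq_of_mul_eq_one_right this).symm
      · rintro rfl; simp
    ext
    · simp [mul_assoc]
    · by_cases ht : t = cs.simple i <;> simp [h, ht, add_assoc, CharTwo.add_self_eq_zero]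
  right_inv := by
    rintro ⟨t, e⟩
    have h : cs.simple i * t * cs.simple i = cs.simple i ↔ t = cs.simple i := by
      constructor
      · intro h
        have := mul_eq_right.mp h
        rw [← cs.inv_simple i]
        exact (inv_eq_of_mul_eq_one_right this).symm
      · rintro rfl; simp
    ext
    · simp [mul_assoc]
    · by_cases ht : t = cs.simple i <;> simp [h, ht, add_assoc, CharTwo.add_self_eq_zero]

lemma prod_reflPerm_apply (ω : List B) (t : W) (e : ZMod 2) :
    (ω.map (reflPerm cs)).prod (t, e) =
      (cs.wordProd ω * t * (cs.wordProd ω)⁻¹, e + ((cs.rightInvSeq ω).count t : ZMod 2)) := by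
  induction ω with
  | nil => simp
  | cons i ω ih =>
    rw [List.map_cons, List.prod_cons, Equiv.Perm.mul_apply, ih]
    have h : cs.wordProd ω * t * (cs.wordProd ω)⁻¹ = cs.simple i ↔
        (cs.wordProd ω)⁻¹ * cs.simple i * cs.wordProd ω = t := by
      constructor
      · intro h; rw [← h]; group
      · rintro rfl; group
    ext
    · simp [reflPerm, wordProd_cons, mul_assoc]
    · simp [reflPerm, rightInvSeq, List.count_cons, h, add_assoc]

lemma prod_map_alternatingWord_reverse {G : Type*} [Monoid G] (f : B → G) (i j : B) (p : ℕ) :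
    ((alternatingWord i j (2 * p)).reverse.map f).prod = (f j * f i) ^ p := by
  induction p with
  | zero => simp [alternatingWord]
  | succ p ih =>
    have : alternatingWord i j (2 * (p + 1)) = i :: j :: alternatingWord i j (2 * p) := by
      rw [show 2 * (p + 1) = (2 * p + 1) + 1 by ring, alternatingWord_succ', alternatingWord_succ']
      simp
    rw [this]
    simp only [List.reverse_cons, List.map_append, List.prod_append, ih, pow_succ]
    simp [mul_assoc]

/-- The left inversion sequence of the word `s_i s_j s_i ⋯` of length `2 m(i,j)` runs twice through
the same list, so every element occurs an even number of times. -/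
lemma even_count_leftInvSeq (i j : B) (t : W) :
    Even ((cs.leftInvSeq (alternatingWord i j (2 * M i j))).count t) := by
  set l := cs.leftInvSeq (alternatingWord i j (2 * M i j)) with hl
  have hlen : l.length = 2 * M i j := by simp [hl]
  have h : l.take (M i j) = l.drop (M i j) := by
    apply List.ext_getElem
    · simp [hlen]; omega
    · intro k h1 h2
      have hk : k < M i j := by
        simp [hlen] at h1; omega
      simp only [List.getElem_take, List.getElem_drop, hl]
      rw [getElem_leftInvSeq_alternatingWord cs i j _ _ (by omega),
        getElem_leftInvSeq_alternatingWord cs i j _ _ (by omega),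
        prod_alternatingWord_eq_mul_pow, prod_alternatingWord_eq_mul_pow,
        show (2 * k + 1) / 2 = k by omega, show (2 * (M i j + k) + 1) / 2 = M i j + k by omega,
        pow_add]
      simp
  rw [← List.take_append_drop (M i j) l, List.count_append, h]
  exact ⟨_, rfl⟩

lemma isLiftable_reflPerm : M.IsLiftable (reflPerm cs) := by
  intro i j
  rw [← prod_map_alternatingWord_reverse, M.symmetric i j]
  ext1 ⟨t, e⟩
  have hw : cs.wordProd (alternatingWord j i (2 * M j i)).reverse = 1 := by
    have := prod_map_alternatingWord_reverse cs.simple j i (M j i)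
    rw [wordProd, this]; simp
  have hc := even_count_leftInvSeq cs j i t
  rw [prod_reflPerm_apply, hw, rightInvSeq_reverse, List.count_reverse,
    (ZMod.natCast_eq_zero_iff_even).mpr hc]
  simp

/-- The action of `W` on `W × ZMod 2` in which `s_i` acts by `reflPerm cs i`. -/
noncomputable def reflHom : W →* Equiv.Perm (W × ZMod 2) :=
  cs.lift ⟨reflPerm cs, isLiftable_reflPerm cs⟩

lemma reflHom_wordProd (ω : List B) (t : W) (e : ZMod 2) :
    reflHom cs (cs.wordProd ω) (t, e) =
      (cs.wordProd ω * t * (cs.wordProd ω)⁻¹, e + ((cs.rightInvSeq ω).count t : ZMod 2)) := by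
  rw [← prod_reflPerm_apply, wordProd, map_list_prod, List.map_map]
  congr 4
  funext i
  exact cs.lift_apply_simple _ i

lemma simple_mem_rightInvSeq {ω : List B} {i : B} (h : cs.IsRightDescent (cs.wordProd ω) i) :
    cs.simple i ∈ cs.rightInvSeq ω := by
  by_contra hn
  obtain ⟨α, hα, hw⟩ := cs.exists_isReduced (cs.wordProd ω * cs.simple i)
  -- as `s_i` is not in `ris ω`, it occurs an odd number of times in `ris α`
  have h1 : reflHom cs (cs.wordProd ω * cs.simple i) (cs.simple i, 0) =
      reflHom cs (cs.wordProd ω) (cs.simple i, 1) := by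
    rw [map_mul, Equiv.Perm.mul_apply]
    congr 1
    have := reflHom_wordProd cs [i] (cs.simple i) 0
    simpa using this
  rw [hw, reflHom_wordProd, reflHom_wordProd] at h1
  have h2 := congrArg Prod.snd h1
  simp only [List.count_eq_zero_of_not_mem hn] at h2
  have hmem : cs.simple i ∈ cs.rightInvSeq α := by
    by_contra hn'
    simp [List.count_eq_zero_of_not_mem hn'] at h2
  have h3 := (cs.isRightInversion_of_mem_rightInvSeq hα hmem).2
  rw [← hw, simple_mul_simple_cancel_right] at h3
  exact lt_asymm h h3

/-- The exchange property for a word `α ++ ω`, recording in which part the letter is deleted. -/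
lemma exchange {α ω : List B} {i : B}
    (h : cs.IsRightDescent (cs.wordProd α * cs.wordProd ω) i) :
    (∃ ω' : List B, ω' ⊆ ω ∧ ω'.length + 1 = ω.length ∧
        cs.wordProd ω * cs.simple i = cs.wordProd ω') ∨
    (∃ α' : List B, α'.length + 1 = α.length ∧
        cs.wordProd α * cs.wordProd ω * cs.simple i = cs.wordProd α' * cs.wordProd ω) := by
  rw [← wordProd_append] at h
  obtain ⟨j, hj, hji⟩ := List.getElem_of_mem (simple_mem_rightInvSeq cs h)
  have hj' : j < α.length + ω.length := by simpa using hj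
  have he := cs.wordProd_mul_getD_rightInvSeq (α ++ ω) j
  rw [List.getD_eq_getElem _ _ hj, hji] at he
  by_cases hjα : j < α.length
  · right
    rw [List.eraseIdx_append_of_lt_length hjα] at he
    refine ⟨α.eraseIdx j, ?_, ?_⟩
    · rw [List.length_eraseIdx_of_lt hjα]; omega
    · rw [← wordProd_append, he, wordProd_append]
  · left
    rw [List.eraseIdx_append_of_length_le (not_lt.mp hjα)] at he
    refine ⟨ω.eraseIdx (j - α.length), List.eraseIdx_subset, ?_, ?_⟩
    · rw [List.length_eraseIdx_of_lt (by omega)]; omega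
    · rw [wordProd_append, wordProd_append, mul_assoc] at he
      exact mul_left_cancel he

/-! ### Finiteness -/

lemma finite_length_le [Finite B] (n : ℕ) : {w : W | cs.length w ≤ n}.Finite := by
  refine ((List.finite_length_le B n).image cs.wordProd).subset ?_
  intro w hw
  obtain ⟨ω, hω, rfl⟩ := cs.exists_isReduced w
  exact ⟨ω, by simpa [← hω.eq] using hw, rfl⟩

/-- If every generator is a right descent of `w`, every reduced word is a suffix of a reduced word
of `w`. -/
lemma exists_prefix {w : W} (hw : ∀ i, cs.IsRightDescent w i) (ω : List B)
    (hω : cs.IsReduced ω) :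
    ∃ α : List B, w = cs.wordProd α * cs.wordProd ω ∧ cs.length w = α.length + ω.length := by
  induction ω using List.reverseRecOn with
  | nil =>
    obtain ⟨α, hα, rfl⟩ := cs.exists_isReduced w
    exact ⟨α, by simp, by simpa using hα.eq⟩
  | append_singleton ω i ih =>
    have hω' : cs.IsReduced ω := by
      have := hω.take ω.length
      simpa using this
    obtain ⟨α, rfl, hl⟩ := ih hω'
    rcases exchange cs (hw i) with ⟨ω', -, h1, h2⟩ | ⟨α', h1, h2⟩
    · exfalso
      have h3 := hω.eq
      rw [wordProd_append, wordProd_singleton, h2] at h3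
      have := cs.length_wordProd_le ω'
      simp at h3
      omega
    · refine ⟨α', ?_, ?_⟩
      · rw [wordProd_append, wordProd_singleton, ← mul_assoc, ← h2, simple_mul_simple_cancel_right]
      · simp; omega

lemma finite_of_forall_isRightDescent [Finite B] {w : W} (hw : ∀ i, cs.IsRightDescent w i) :
    Finite W := by
  refine Set.finite_univ_iff.mp ((finite_length_le cs (cs.length w)).subset ?_)
  intro v _
  obtain ⟨ω, hω, rfl⟩ := cs.exists_isReduced v
  obtain ⟨α, -, h⟩ := exists_prefix cs hw ω hω
  have := hω.eq
  simp only [Set.mem_ofPred_eq]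
  omega

/-! ### Lengths in parabolic subgroups -/

/-- The standard parabolic subgroup `W_X`. -/
def parabolic (X : Set B) : Subgroup W := Subgroup.closure (cs.simple '' X)

/-- The word length of `W_X` with respect to `X`. -/
noncomputable def parLen (X : Set B) (w : W) : ℕ := wordLength (cs.simple '' X) w

lemma wordProd_mem_parabolic {X : Set B} {ω : List B} (hω : ∀ i ∈ ω, i ∈ X) :
    cs.wordProd ω ∈ parabolic cs X := by
  apply Subgroup.list_prod_mem
  intro x hx
  obtain ⟨i, hi, rfl⟩ := List.mem_map.mp hx
  exact Subgroup.subset_closure ⟨i, hω i hi, rfl⟩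

lemma image_union_inv (X : Set B) :
    cs.simple '' X ∪ (cs.simple '' X)⁻¹ = cs.simple '' X := by
  apply Set.union_eq_self_of_subset_right
  rintro x ⟨i, hi, h⟩
  refine ⟨i, hi, ?_⟩
  rw [← inv_inv x, ← h, inv_simple]

lemma parLen_wordProd_le {X : Set B} {ω : List B} (hω : ∀ i ∈ ω, i ∈ X) :
    parLen cs X (cs.wordProd ω) ≤ ω.length := by
  apply Nat.sInf_le
  refine ⟨ω.map cs.simple, by simp, ?_, rfl⟩
  intro x hx
  obtain ⟨i, hi, rfl⟩ := List.mem_map.mp hx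
  exact Or.inl ⟨i, hω i hi, rfl⟩

lemma exists_word_of_list {X : Set B} (l : List W) (hl : ∀ a ∈ l, a ∈ cs.simple '' X) :
    ∃ ω : List B, (∀ i ∈ ω, i ∈ X) ∧ l = ω.map cs.simple := by
  induction l with
  | nil => exact ⟨[], by simp⟩
  | cons a l ih =>
    obtain ⟨ω, h1, rfl⟩ := ih fun b hb => hl b (List.mem_cons_of_mem _ hb)
    obtain ⟨i, hi, rfl⟩ := hl a List.mem_cons_self
    exact ⟨i :: ω, by simpa [hi] using h1, rfl⟩

lemma exists_word {X : Set B} {v : W} (hv : v ∈ parabolic cs X) :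
    ∃ ω : List B, (∀ i ∈ ω, i ∈ X) ∧ ω.length = parLen cs X v ∧ cs.wordProd ω = v := by
  have hne : {n | ∃ w : List W, w.length = n ∧
      (∀ a ∈ w, a ∈ cs.simple '' X ∪ (cs.simple '' X)⁻¹) ∧ w.prod = v}.Nonempty := by
    rw [parabolic, ← Subgroup.mem_toSubmonoid, Subgroup.closure_toSubmonoid] at hv
    obtain ⟨l, h1, h2⟩ := Submonoid.exists_list_of_mem_closure hv
    exact ⟨l.length, l, rfl, h1, h2⟩
  obtain ⟨l, h1, h2, h3⟩ := Nat.sInf_mem hne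
  rw [image_union_inv] at h2
  obtain ⟨ω, h4, rfl⟩ := exists_word_of_list cs l h2
  exact ⟨ω, h4, by simpa [parLen, wordLength] using h1, h3⟩

lemma parLen_one (X : Set B) : parLen cs X 1 = 0 := by
  simpa using parLen_wordProd_le cs (X := X) (ω := []) (by simp)

lemma eq_one_of_parLen_eq_zero {X : Set B} {v : W} (hv : v ∈ parabolic cs X)
    (h : parLen cs X v = 0) : v = 1 := by
  obtain ⟨ω, -, h2, rfl⟩ := exists_word cs hv
  rw [h, List.length_eq_zero_iff] at h2
  simp [h2]

lemma parabolic_univ : parabolic cs Set.univ = ⊤ := by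
  rw [parabolic, Set.image_univ, subgroup_closure_range_simple]

lemma parLen_univ (w : W) : parLen cs Set.univ w = cs.length w := by
  apply le_antisymm
  · obtain ⟨ω, hω, rfl⟩ := cs.exists_isReduced w
    rw [hω.eq]
    exact parLen_wordProd_le cs (by simp)
  · obtain ⟨ω, -, h2, rfl⟩ := exists_word cs (X := Set.univ) (v := w) (by simp [parabolic_univ])
    rw [← h2]
    exact cs.length_wordProd_le ω

lemma length_le_parLen {X : Set B} {v : W} (hv : v ∈ parabolic cs X) :
    cs.length v ≤ parLen cs X v := by
  obtain ⟨ω, -, h2, rfl⟩ := exists_word cs hv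
  rw [← h2]
  exact cs.length_wordProd_le ω

/-! ### Coset representatives without descents in `X` -/

/-- The set `W^X` of elements without right descent in `X`. -/
def minReps (X : Set B) : Set W := {u | ∀ i ∈ X, ¬ cs.IsRightDescent u i}

lemma length_mul_of_isMin {X : Set B} {u : W}
    (hu : ∀ v ∈ parabolic cs X, cs.length u ≤ cs.length (u * v)) (ω : List B)
    (hX : ∀ i ∈ ω, i ∈ X) (hω : parLen cs X (cs.wordProd ω) = ω.length) :
    cs.length (u * cs.wordProd ω) = cs.length u + ω.length := by
  induction ω using List.reverseRecOn with
  | nil => simp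
  | append_singleton ω i ih =>
    have hXω : ∀ j ∈ ω, j ∈ X := fun j hj => hX j (by simp [hj])
    have hXi : i ∈ X := hX i (by simp)
    have hω' : parLen cs X (cs.wordProd ω) = ω.length := by
      refine le_antisymm (parLen_wordProd_le cs hXω) ?_
      obtain ⟨ω', h1, h2, h3⟩ := exists_word cs (wordProd_mem_parabolic cs hXω)
      have h4 := parLen_wordProd_le cs (X := X) (ω := ω' ++ [i]) (by
        intro j hj
        rcases List.mem_append.mp hj with hj | hj
        · exact h1 j hj
        · rw [List.mem_singleton.mp hj]; exact hXi)
      rw [wordProd_append, h3, ← wordProd_append, hω] at h4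
      simp at h4
      omega
    have ih' := ih hXω hω'
    have hnd : ¬ cs.IsRightDescent (u * cs.wordProd ω) i := by
      intro hd
      obtain ⟨α, hα, rfl⟩ := cs.exists_isReduced u
      rcases exchange cs hd with ⟨ω', h0, h1, h2⟩ | ⟨α', h1, h2⟩
      · have := parLen_wordProd_le cs (X := X) (ω := ω') fun j hj => hXω j (h0 hj)
        rw [← h2, ← wordProd_singleton, ← wordProd_append, hω] at this
        simp at this
        omega
      · have hm := cs.length_wordProd_le α'
        have hin : cs.wordProd ω * cs.simple i * (cs.wordProd ω)⁻¹ ∈ parabolic cs X := by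
          have hp := wordProd_mem_parabolic cs hXω
          exact mul_mem (mul_mem hp (Subgroup.subset_closure ⟨i, hXi, rfl⟩)) (inv_mem hp)
        have := hu _ hin
        rw [show cs.wordProd α * (cs.wordProd ω * cs.simple i * (cs.wordProd ω)⁻¹) =
          cs.wordProd α * cs.wordProd ω * cs.simple i * (cs.wordProd ω)⁻¹ by group, h2,
          mul_inv_cancel_right, hα.eq] at this
        omega
    rw [not_isRightDescent_iff] at hnd
    rw [wordProd_append, wordProd_singleton, ← mul_assoc, hnd, ih']
    simp [add_assoc]

/-- Lengths add up on `u W_X` when `u` has minimal length in this coset. -/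
lemma length_mul_of_isMin' {X : Set B} {u v : W}
    (hu : ∀ v ∈ parabolic cs X, cs.length u ≤ cs.length (u * v)) (hv : v ∈ parabolic cs X) :
    cs.length (u * v) = cs.length u + parLen cs X v := by
  obtain ⟨ω, h1, h2, rfl⟩ := exists_word cs hv
  rw [length_mul_of_isMin cs hu ω h1 h2.symm, h2]

lemma exists_isMin (X : Set B) (w : W) :
    ∃ u, (∀ v ∈ parabolic cs X, cs.length u ≤ cs.length (u * v)) ∧ u⁻¹ * w ∈ parabolic cs X := by
  obtain ⟨u, hu, hmin⟩ := exists_minimalFor_of_wellFoundedLT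
    (fun u => u⁻¹ * w ∈ parabolic cs X) cs.length ⟨w, by simp⟩
  refine ⟨u, fun v hv => ?_, hu⟩
  by_contra hlt
  refine hlt (hmin (j := u * v) ?_ (not_le.mp hlt).le)
  change (u * v)⁻¹ * w ∈ parabolic cs X
  rw [mul_inv_rev, mul_assoc]
  exact mul_mem (inv_mem hv) hu

lemma isMin_of_mem_minReps {X : Set B} {u : W} (hu : u ∈ minReps cs X) :
    ∀ v ∈ parabolic cs X, cs.length u ≤ cs.length (u * v) := by
  obtain ⟨a, ha, hau⟩ := exists_isMin cs X u
  obtain ⟨ω, h1, h2, h3⟩ := exists_word cs hau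
  rcases List.eq_nil_or_concat' ω with rfl | ⟨ω, i, rfl⟩
  · have : u = a := by
      rw [wordProd_nil] at h3
      exact (inv_mul_eq_one.mp h3.symm).symm
    rwa [this]
  · exfalso
    have hXω : ∀ j ∈ ω, j ∈ X := fun j hj => h1 j (by simp [hj])
    apply hu i (h1 i (by simp))
    have h4 := length_mul_of_isMin' cs ha hau
    have h5 := length_mul_of_isMin' cs ha (wordProd_mem_parabolic cs hXω)
    have h6 := parLen_wordProd_le cs hXω
    have h7 : a * cs.wordProd ω = u * cs.simple i := by
      rw [wordProd_append, wordProd_singleton] at h3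
      rw [show u = a * (a⁻¹ * u) by group, ← h3]
      simp [mul_assoc]
    rw [h7] at h5
    rw [mul_inv_cancel_left] at h4
    simp at h2
    unfold IsRightDescent
    omega

lemma length_mul_minReps {X : Set B} {u v : W} (hu : u ∈ minReps cs X)
    (hv : v ∈ parabolic cs X) : cs.length (u * v) = cs.length u + parLen cs X v :=
  length_mul_of_isMin' cs (isMin_of_mem_minReps cs hu) hv

lemma exists_minReps (X : Set B) (w : W) :
    ∃ u ∈ minReps cs X, ∃ v ∈ parabolic cs X, u * v = w := by
  obtain ⟨u, hu, huw⟩ := exists_isMin cs X w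
  refine ⟨u, fun i hi hd => ?_, _, huw, by group⟩
  exact absurd (hu _ (Subgroup.subset_closure ⟨i, hi, rfl⟩)) (not_le.mpr hd)

lemma minReps_unique {X : Set B} {u u' v v' : W} (hu : u ∈ minReps cs X)
    (hu' : u' ∈ minReps cs X) (hv : v ∈ parabolic cs X) (hv' : v' ∈ parabolic cs X)
    (h : u * v = u' * v') : u = u' ∧ v = v' := by
  have hz : v * v'⁻¹ ∈ parabolic cs X := mul_mem hv (inv_mem hv')
  have e : u * (v * v'⁻¹) = u' := by rw [← mul_assoc, h, mul_inv_cancel_right]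
  have e' : u' * (v * v'⁻¹)⁻¹ = u := by rw [← e, mul_inv_cancel_right]
  have h1 := length_mul_minReps cs hu hz
  have h2 := length_mul_minReps cs hu' (inv_mem hz)
  rw [e] at h1
  rw [e'] at h2
  have h3 : v * v'⁻¹ = 1 := eq_one_of_parLen_eq_zero cs hz (by omega)
  rw [h3, mul_one] at e
  exact ⟨e, mul_inv_eq_one.mp h3⟩

/-! ### Growth series -/

/-- The growth series `∑_{u ∈ W^X} t^{ℓ(u)}`. -/
noncomputable def minRepsSeries (X : Set B) : PowerSeries ℤ :=
  PowerSeries.mk fun n => (Set.ncard {u ∈ minReps cs X | cs.length u = n} : ℤ)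

/-- The growth series of `(W_X, X)`. -/
noncomputable def parSeries (X : Set B) : PowerSeries ℤ :=
  growthSeries (cs.simple '' X) (Subgroup.closure (cs.simple '' X) : Set W)

lemma coeff_parSeries (X : Set B) (n : ℕ) : PowerSeries.coeff n (parSeries cs X) =
    (Set.ncard {v | v ∈ parabolic cs X ∧ parLen cs X v = n} : ℤ) := by
  simp only [parSeries, growthSeries, PowerSeries.coeff_mk]
  rfl

lemma parSeries_univ :
    parSeries cs Set.univ = growthSeries (Set.range cs.simple) (Set.univ : Set W) := by
  rw [parSeries, Set.image_univ, subgroup_closure_range_simple]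
  rfl

lemma isUnit_parSeries (X : Set B) : IsUnit (parSeries cs X) := by
  rw [PowerSeries.isUnit_iff_constantCoeff, ← PowerSeries.coeff_zero_eq_constantCoeff_apply,
    coeff_parSeries]
  have : {v | v ∈ parabolic cs X ∧ parLen cs X v = 0} = {1} := by
    ext v
    constructor
    · rintro ⟨h1, h2⟩
      exact eq_one_of_parLen_eq_zero cs h1 h2
    · rintro rfl
      exact ⟨one_mem _, parLen_one cs X⟩
  simp [this]

lemma growthSeries_mul [Finite B] (X : Set B) :
    parSeries cs Set.univ = minRepsSeries cs X * parSeries cs X := by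
  ext n
  rw [PowerSeries.coeff_mul, coeff_parSeries]
  simp only [coeff_parSeries, minRepsSeries, PowerSeries.coeff_mk]
  simp only [← Nat.cast_mul, ← Nat.cast_sum, Nat.cast_inj]
  let F : (Σ p : Finset.HasAntidiagonal.antidiagonal n,
      {u // u ∈ minReps cs X ∧ cs.length u = p.1.1} ×
      {v // v ∈ parabolic cs X ∧ parLen cs X v = p.1.2}) →
      {w // w ∈ parabolic cs Set.univ ∧ parLen cs Set.univ w = n} := fun q =>
    ⟨q.2.1.1 * q.2.2.1, by simp [parabolic_univ], by
      rw [parLen_univ, length_mul_minReps cs q.2.1.2.1 q.2.2.2.1, q.2.1.2.2, q.2.2.2.2]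
      exact Finset.HasAntidiagonal.mem_antidiagonal.mp q.1.2⟩
  have hF : Function.Bijective F := by
    constructor
    · rintro ⟨⟨⟨a, b⟩, hp⟩, ⟨u, hu, hul⟩, ⟨v, hv, hvl⟩⟩
        ⟨⟨⟨a', b'⟩, hp'⟩, ⟨u', hu', hul'⟩, ⟨v', hv', hvl'⟩⟩ h
      have h' : u * v = u' * v' := congrArg Subtype.val h
      obtain ⟨rfl, rfl⟩ := minReps_unique cs hu hu' hv hv' h'
      simp only at hul hul' hvl hvl'
      subst hul hul' hvl hvl'
      rfl
    · rintro ⟨w, hw, hwl⟩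
      obtain ⟨u, hu, v, hv, rfl⟩ := exists_minReps cs X w
      rw [parLen_univ, length_mul_minReps cs hu hv] at hwl
      exact ⟨⟨⟨(_, _), Finset.HasAntidiagonal.mem_antidiagonal.mpr hwl⟩, ⟨u, hu, rfl⟩, ⟨v, hv, rfl⟩⟩, rfl⟩
  have fin1 : ∀ k, Finite {u // u ∈ minReps cs X ∧ cs.length u = k} := fun k =>
    ((finite_length_le cs k).subset fun u hu => hu.2.le).to_subtype
  have fin2 : ∀ k, Finite {v // v ∈ parabolic cs X ∧ parLen cs X v = k} := fun k =>
    ((finite_length_le cs k).subset fun v hv =>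
      (length_le_parLen cs hv.1).trans hv.2.le).to_subtype
  have hcard := Nat.card_congr (Equiv.ofBijective F hF)
  rw [Nat.card_sigma] at hcard
  simp only [Nat.card_prod] at hcard
  rw [← Finset.sum_coe_sort]
  exact hcard.symm

/-- For infinite `W` no element has all generators as right descents, so the alternating sum over
the subsets of its set of non-descents vanishes. -/
lemma sum_minRepsSeries [Fintype B] [Infinite W] :
    ∑ X : Finset B, (-1 : PowerSeries ℤ) ^ X.card * minRepsSeries cs (X : Set B) = 0 := by
  ext n
  have hfin : {w : W | cs.length w = n}.Finite :=
    (finite_length_le cs n).subset fun w hw => le_of_eq hw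
  have key : ∀ X : Finset B,
      PowerSeries.coeff n ((-1 : PowerSeries ℤ) ^ X.card * minRepsSeries cs (X : Set B)) =
      ∑ w ∈ hfin.toFinset, if X ⊆ Finset.univ.filter (fun i => ¬ cs.IsRightDescent w i)
        then (-1 : ℤ) ^ X.card else 0 := by
    intro X
    have h1 : ((-1 : PowerSeries ℤ) ^ X.card) = PowerSeries.C ((-1 : ℤ) ^ X.card) := by simp
    rw [h1, PowerSeries.coeff_C_mul, minRepsSeries, PowerSeries.coeff_mk, ← Finset.sum_filter,
      Finset.sum_const, nsmul_eq_mul, mul_comm]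
    congr 2
    rw [← Set.ncard_coe_finset]
    congr 1
    ext w
    simp [minReps, Finset.subset_iff, and_comm]
  rw [map_sum, map_zero, Finset.sum_congr rfl fun X _ => key X, Finset.sum_comm]
  apply Finset.sum_eq_zero
  intro w _
  have hne : (Finset.univ.filter (fun i => ¬ cs.IsRightDescent w i)).Nonempty := by
    by_contra h
    rw [Finset.not_nonempty_iff_eq_empty, Finset.filter_eq_empty_iff] at h
    have : Finite W := finite_of_forall_isRightDescent cs (w := w) fun i =>
      not_not.mp (h (Finset.mem_univ i))
    exact not_finite W
  rw [← Finset.sum_filter, ← Finset.sum_powerset_neg_one_pow_card_of_nonempty hne]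
  apply Finset.sum_congr _ fun _ _ => rfl
  ext X
  simp

end CoxeterGrowth

/-- For an infinite Coxeter system `(W,S)`,
`(−1)^{|S|+1} 𝒢_{(W,S)}⁻¹ = ∑_{X ⊊ S} (−1)^{|X|} 𝒢_{(W_X,X)}⁻¹`. -/
theorem coxeter_growthSeries_inv_alternating_sum
    {B : Type} [Fintype B] {W : Type} [Group W] {M : CoxeterMatrix B}
    (cs : CoxeterSystem M W) (hinf : Infinite W) :
    (-1 : PowerSeries ℤ) ^ (Fintype.card B + 1) *
        Ring.inverse (growthSeries (Set.range cs.simple) (Set.univ : Set W)) =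
      ∑ X ∈ (Finset.univ : Finset B).powerset.erase Finset.univ,
        (-1 : PowerSeries ℤ) ^ X.card *
          Ring.inverse (growthSeries (cs.simple '' (↑X : Set B))
            (Subgroup.closure (cs.simple '' (↑X : Set B)) : Set W)) := by
  have key : ∑ X : Finset B, (-1 : PowerSeries ℤ) ^ X.card *
      Ring.inverse (CoxeterGrowth.parSeries cs (X : Set B)) = 0 := by
    have hu := CoxeterGrowth.isUnit_parSeries cs Set.univ
    rw [← hu.mul_right_eq_zero, Finset.mul_sum, ← CoxeterGrowth.sum_minRepsSeries cs]
    apply Finset.sum_congr rfl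
    intro X _
    rw [CoxeterGrowth.growthSeries_mul cs (X : Set B), mul_left_comm, mul_assoc,
      Ring.mul_inverse_cancel _ (CoxeterGrowth.isUnit_parSeries cs _), mul_one]
  rw [← Finset.add_sum_erase _ _ (Finset.mem_univ (Finset.univ : Finset B)), Finset.coe_univ,
    CoxeterGrowth.parSeries_univ, Finset.card_univ] at key
  rw [Finset.powerset_univ, pow_succ, mul_neg_one, neg_mul]
  exact neg_eq_of_add_eq_zero_right key
end
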